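/- arXiv:2604.27793 — 2 statements merged into one kernel-verified Lean document; each statement's English description precedes it below -/
import Mathlib

section
/- Let d ≥ 0 be an integer and let α₁,…,α_d ≥ 0 be real numbers. Then the limit as real α decreases to −1 of (α+1)·b(α; α₁,…,α_d) exists and equals 2 if d = 0, and equals ∏_{i=1}^{d} √π·Γ((αᵢ+1)/2)/Γ((αᵢ+2)/2) if d ≥ 1. -/
/-!
Put `h = ∏ⱼ F_{αⱼ}`, a continuous function on `ℝ`. Since `cos` is even, folding the integral at
the origin gives
`(α + 1) b(α) = ∫_{(0, π/2)} (α + 1) cos^α x · (h x + h (-x)) dx`.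
As `α ↓ -1` the weights `(α + 1) cos^α` form an approximate identity at `π/2`: they are nonnegative,
they tend to `0` uniformly away from `π/2`, and their total mass tends to `1`. Hence the limit is
`h (π/2) + h (-π/2)`. For `d = 0` both terms are `1`; for `d ≥ 1` the second one vanishes and the
first one is the product of the full integrals `F_{αⱼ}(π/2)`.

Both the total mass and the values `F_β(π/2)` come from
`∫_{(0, π/2)} cos^β = √π Γ((β+1)/2) / Γ((β+2)/2) / 2` for `β > -1`, which is the Beta integral
`B(1/2, (β+1)/2)` after the substitution `u = sin² x`.
-/

open MeasureTheory Finset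

noncomputable section

/-- `F_β(x) = ∫_{-π/2}^x cos^β(y) dy` for `x ∈ [-π/2, π/2]`. -/
def Freal (β : ℝ) (x : ℝ) : ℝ := ∫ y in (-(Real.pi / 2))..x, Real.cos y ^ β

/-- The (real-valued) function `b(α; α₁,…,α_d)` for real `α > -1`. -/
def bReal (d : ℕ) (αs : Fin d → ℝ) (α : ℝ) : ℝ :=
  ∫ x in (-(Real.pi / 2))..(Real.pi / 2), Real.cos x ^ α * ∏ j, Freal (αs j) x

/-- The real Beta integral over the open unit interval. -/
theorem setIntegral_beta {a b : ℝ} (ha : 0 < a) (hb : 0 < b) :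
    ∫ x in Set.Ioo (0 : ℝ) 1, x ^ (a - 1) * (1 - x) ^ (b - 1) =
      Real.Gamma a * Real.Gamma b / Real.Gamma (a + b) := by
  have h := ProbabilityTheory.beta_eq_betaIntegralReal a b ha hb
  rw [ProbabilityTheory.beta] at h
  rw [h, Complex.betaIntegral, intervalIntegral.integral_of_le (by norm_num),
    ← integral_Ioc_eq_integral_Ioo, ← RCLike.re_to_complex, ← integral_re]
  · refine setIntegral_congr_fun measurableSet_Ioc fun x ⟨hx1, hx2⟩ ↦ ?_
    norm_cast
    rw [← Complex.ofReal_cpow, ← Complex.ofReal_cpow, RCLike.re_to_complex,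
      Complex.re_mul_ofReal, Complex.ofReal_re]
    all_goals linarith
  · have := Complex.betaIntegral_convergent (u := a) (v := b) (by simpa) (by simpa)
    rwa [intervalIntegrable_iff_integrableOn_Ioc_of_le (by simp)] at this

theorem sin_sq_image_Ioo :
    (fun x : ℝ => Real.sin x ^ 2) '' Set.Ioo 0 (Real.pi / 2) = Set.Ioo 0 1 := by
  ext u
  constructor
  · rintro ⟨x, ⟨h0, h1⟩, rfl⟩
    have hs : 0 < Real.sin x := Real.sin_pos_of_pos_of_lt_pi h0 (by linarith [Real.pi_pos])
    have hc : 0 < Real.cos x := Real.cos_pos_of_mem_Ioo ⟨by linarith, h1⟩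
    exact ⟨by positivity, by nlinarith [Real.sin_sq_add_cos_sq x]⟩
  · rintro ⟨h0, h1⟩
    have hs : 0 < √u := Real.sqrt_pos.2 h0
    have hs1 : √u < 1 := by rw [Real.sqrt_lt' one_pos]; simpa using h1
    refine ⟨Real.arcsin (√u), ⟨Real.arcsin_pos.2 hs, Real.arcsin_lt_pi_div_two.2 hs1⟩, ?_⟩
    simp only
    rw [Real.sin_arcsin (by linarith) hs1.le, Real.sq_sqrt h0.le]

theorem setIntegral_cos_rpow {β : ℝ} (hβ : -1 < β) :
    ∫ x in Set.Ioo 0 (Real.pi / 2), Real.cos x ^ β =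
      √Real.pi * Real.Gamma ((β + 1) / 2) / Real.Gamma ((β + 2) / 2) / 2 := by
  have hB := setIntegral_beta (a := 1 / 2) (b := (β + 1) / 2) (by norm_num) (by linarith)
  have hinj : Set.InjOn (fun x : ℝ => Real.sin x ^ 2) (Set.Ioo 0 (Real.pi / 2)) := by
    intro x hx y hy hxy
    have hsx : 0 < Real.sin x :=
      Real.sin_pos_of_pos_of_lt_pi hx.1 (by linarith [hx.2, Real.pi_pos])
    have hsy : 0 < Real.sin y :=
      Real.sin_pos_of_pos_of_lt_pi hy.1 (by linarith [hy.2, Real.pi_pos])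
    have := (sq_eq_sq₀ hsx.le hsy.le).1 hxy
    exact Real.injOn_sin ⟨by linarith [hx.1, Real.pi_pos], hx.2.le⟩
      ⟨by linarith [hy.1, Real.pi_pos], hy.2.le⟩ this
  rw [← sin_sq_image_Ioo, integral_image_eq_integral_abs_deriv_smul
    (f' := fun x => 2 * Real.sin x * Real.cos x) measurableSet_Ioo
    (fun x _ => by simpa using ((Real.hasDerivAt_sin x).fun_pow 2).hasDerivWithinAt) hinj] at hB
  have hcongr : ∫ x in Set.Ioo 0 (Real.pi / 2), |2 * Real.sin x * Real.cos x| •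
      ((Real.sin x ^ 2) ^ ((1 / 2 : ℝ) - 1) * (1 - Real.sin x ^ 2) ^ ((β + 1) / 2 - 1)) =
      ∫ x in Set.Ioo 0 (Real.pi / 2), 2 * Real.cos x ^ β := by
    refine setIntegral_congr_fun measurableSet_Ioo fun x hx => ?_
    have hs : 0 < Real.sin x :=
      Real.sin_pos_of_pos_of_lt_pi hx.1 (by linarith [hx.2, Real.pi_pos])
    have hc : 0 < Real.cos x := Real.cos_pos_of_mem_Ioo ⟨by linarith [hx.1, Real.pi_pos], hx.2⟩
    have e1 : (Real.sin x ^ 2) ^ ((1 / 2 : ℝ) - 1) = (Real.sin x)⁻¹ := by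
      rw [← Real.rpow_natCast, ← Real.rpow_mul hs.le, ← Real.rpow_neg_one]
      norm_num
    have e2 : (1 - Real.sin x ^ 2) ^ ((β + 1) / 2 - 1) = Real.cos x ^ β / Real.cos x := by
      rw [← Real.cos_sq', ← Real.rpow_natCast, ← Real.rpow_mul hc.le, ← Real.rpow_sub_one hc.ne']
      congr 1
      push_cast
      ring
    simp only [smul_eq_mul]
    rw [e1, e2, abs_of_pos (by positivity)]
    field_simp
  rw [hcongr, integral_const_mul, Real.Gamma_one_half_eq] at hB
  rw [show (1 / 2 : ℝ) + (β + 1) / 2 = (β + 2) / 2 by ring] at hB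
  linarith

theorem integrableOn_cos_rpow {β : ℝ} (hβ : -1 < β) :
    IntegrableOn (fun x => Real.cos x ^ β) (Set.Ioo 0 (Real.pi / 2)) := by
  -- a nonzero Bochner integral forces integrability
  apply Integrable.of_integral_ne_zero
  rw [setIntegral_cos_rpow hβ]
  have h1 : 0 < Real.Gamma ((β + 1) / 2) := Real.Gamma_pos_of_pos (by linarith)
  have h2 : 0 < Real.Gamma ((β + 2) / 2) := Real.Gamma_pos_of_pos (by linarith)
  have := Real.pi_pos
  positivity

/-- Folding at the origin: `cos` is even, so an integral against `cos^α` only sees the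
symmetrization of `h`. -/
theorem integral_cos_rpow_mul {α : ℝ} (hα : -1 < α) {h : ℝ → ℝ} (hh : Continuous h) :
    ∫ x in (-(Real.pi / 2))..(Real.pi / 2), Real.cos x ^ α * h x =
      ∫ x in Set.Ioo 0 (Real.pi / 2), Real.cos x ^ α * (h x + h (-x)) := by
  have hp := Real.pi_pos
  have hint : ∀ g : ℝ → ℝ, Continuous g →
      IntervalIntegrable (fun x => Real.cos x ^ α * g x) volume 0 (Real.pi / 2) := by
    intro g hg
    refine IntervalIntegrable.mul_continuousOn ?_ hg.continuousOn
    rw [intervalIntegrable_iff_integrableOn_Ioo_of_le (by positivity)]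
    exact integrableOn_cos_rpow hα
  have hn : Continuous fun x => h (-x) := hh.comp continuous_neg
  have hneg : IntervalIntegrable (fun x => Real.cos x ^ α * h x) volume (-(Real.pi / 2)) 0 := by
    have := (hint _ hn).comp_sub_left 0
    simpa using this.symm
  have hfold : ∫ x in (-(Real.pi / 2))..0, Real.cos x ^ α * h x =
      ∫ x in (0 : ℝ)..(Real.pi / 2), Real.cos x ^ α * h (-x) := by
    have := intervalIntegral.integral_comp_neg (a := 0) (b := Real.pi / 2)
      (fun x => Real.cos x ^ α * h x)
    simpa using this.symm
  rw [← intervalIntegral.integral_add_adjacent_intervals hneg (hint h hh), hfold,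
    ← intervalIntegral.integral_add (hint _ hn) (hint h hh),
    intervalIntegral.integral_of_le (by positivity), integral_Ioc_eq_integral_Ioo]
  refine integral_congr_ae (Filter.Eventually.of_forall fun x => ?_)
  simp only
  ring

theorem tendsto_mass :
    Filter.Tendsto (fun α : ℝ => ∫ x in Set.Ioo 0 (Real.pi / 2), (α + 1) * Real.cos x ^ α)
      (nhdsWithin (-1) (Set.Ioi (-1))) (nhds 1) := by
  have hcont : ∀ s : ℝ, 0 < s → ContinuousAt Real.Gamma s := fun s hs =>
    (Real.differentiableAt_Gamma fun m => by
      have : (0 : ℝ) ≤ m := m.cast_nonneg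
      linarith).continuousAt
  have hlim : Filter.Tendsto
      (fun α : ℝ => √Real.pi * Real.Gamma ((α + 1) / 2 + 1) / Real.Gamma ((α + 2) / 2))
      (nhds (-1)) (nhds 1) := by
    have h1 : ContinuousAt (fun α : ℝ => Real.Gamma ((α + 1) / 2 + 1)) (-1) :=
      ContinuousAt.comp (g := Real.Gamma) (f := fun α : ℝ => (α + 1) / 2 + 1)
        (hcont _ (by norm_num)) (by fun_prop)
    have h2 : ContinuousAt (fun α : ℝ => Real.Gamma ((α + 2) / 2)) (-1) :=
      ContinuousAt.comp (g := Real.Gamma) (f := fun α : ℝ => (α + 2) / 2)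
        (hcont _ (by norm_num)) (by fun_prop)
    have h3 := (h1.const_mul √Real.pi).div h2
      (Real.Gamma_pos_of_pos (by norm_num)).ne'
    have hv : √Real.pi * Real.Gamma ((-1 + 1) / 2 + 1) / Real.Gamma ((-1 + 2) / 2) = 1 := by
      rw [show ((-1 : ℝ) + 1) / 2 + 1 = 1 by norm_num,
        show ((-1 : ℝ) + 2) / 2 = 1 / 2 by norm_num, Real.Gamma_one, Real.Gamma_one_half_eq]
      have := Real.pi_pos
      field_simp
    have h4 := h3.tendsto
    simp only [Pi.div_apply, hv] at h4
    exact h4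
  refine (hlim.mono_left nhdsWithin_le_nhds).congr' ?_
  filter_upwards [self_mem_nhdsWithin] with α hα
  have hα' : -1 < α := hα
  -- the pole of `Γ((α+1)/2)` at `α = -1` is absorbed by the factor `α + 1`
  rw [integral_const_mul, setIntegral_cos_rpow hα', Real.Gamma_add_one (by linarith)]
  ring

/-- The weights `(α + 1) cos^α` concentrate at the two endpoints `±π/2`, with mass one at each. -/
theorem tendsto_mul_integral_cos_rpow {h : ℝ → ℝ} (hh : Continuous h) :
    Filter.Tendsto
      (fun α : ℝ => (α + 1) * ∫ x in (-(Real.pi / 2))..(Real.pi / 2), Real.cos x ^ α * h x)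
      (nhdsWithin (-1) (Set.Ioi (-1))) (nhds (h (Real.pi / 2) + h (-(Real.pi / 2)))) := by
  have hp := Real.pi_pos
  have hg : Continuous fun x => h x + h (-x) := hh.add (hh.comp continuous_neg)
  have key := tendsto_setIntegral_peak_smul_of_integrableOn_of_tendsto
    (μ := volume) (l := nhdsWithin (-1 : ℝ) (Set.Ioi (-1))) (s := Set.Ioo 0 (Real.pi / 2))
    (t := Set.Ioo 0 (Real.pi / 2)) (x₀ := Real.pi / 2)
    (φ := fun α x => (α + 1) * Real.cos x ^ α) (g := fun x => h x + h (-x))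
    (a := h (Real.pi / 2) + h (-(Real.pi / 2)))
    measurableSet_Ioo measurableSet_Ioo subset_rfl self_mem_nhdsWithin
    (by simp) ?_ ?_ tendsto_mass ?_ ?_ ?_
  · refine key.congr' ?_
    filter_upwards [self_mem_nhdsWithin] with α hα
    rw [integral_cos_rpow_mul hα hh, ← integral_const_mul]
    simp only [smul_eq_mul, mul_assoc]
  · filter_upwards [self_mem_nhdsWithin] with α hα x hx
    have hc : 0 < Real.cos x := Real.cos_pos_of_mem_Ioo ⟨by linarith [hx.1], hx.2⟩
    have hα' : -1 < α := hα
    exact mul_nonneg (by linarith) (Real.rpow_nonneg hc.le _)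
  · intro u hu hxu
    obtain ⟨ε, hε, hball⟩ := Metric.isOpen_iff.1 hu _ hxu
    rw [Metric.tendstoUniformlyOn_iff]
    intro δ hδ
    -- off `u` one has `cos x ≥ 1 - 2x/π ≥ 2ε/π`, and `cos^α ≤ cos⁻¹` because `cos ≤ 1`
    have hsmall : Filter.Tendsto (fun α : ℝ => (α + 1) * (2 / Real.pi * ε)⁻¹)
        (nhdsWithin (-1) (Set.Ioi (-1))) (nhds 0) := by
      have : ContinuousAt (fun α : ℝ => (α + 1) * (2 / Real.pi * ε)⁻¹) (-1) := by fun_prop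
      have := this.tendsto
      norm_num at this
      exact (by simpa using this : Filter.Tendsto _ _ _).mono_left nhdsWithin_le_nhds
    filter_upwards [self_mem_nhdsWithin, hsmall.eventually_lt_const hδ] with α hα hlt x hx
    have hα' : -1 < α := hα
    obtain ⟨⟨hx0, hx1⟩, hxn⟩ := hx
    have hxε : x ≤ Real.pi / 2 - ε := by
      by_contra hcon
      refine hxn (hball ?_)
      rw [Metric.mem_ball, Real.dist_eq, abs_lt]
      constructor <;> linarith
    have hcos : 2 / Real.pi * ε ≤ Real.cos x := by
      refine le_trans ?_ (Real.one_sub_mul_le_cos hx0.le hx1.le)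
      have h1 : 2 / Real.pi * x ≤ 2 / Real.pi * (Real.pi / 2 - ε) := by gcongr
      have h2 : 2 / Real.pi * (Real.pi / 2 - ε) = 1 - 2 / Real.pi * ε := by field_simp
      linarith
    have hpos : 0 < 2 / Real.pi * ε := by positivity
    have hc : 0 < Real.cos x := hpos.trans_le hcos
    have hle : Real.cos x ^ α ≤ (2 / Real.pi * ε)⁻¹ :=
      calc Real.cos x ^ α ≤ Real.cos x ^ (-1 : ℝ) :=
            Real.rpow_le_rpow_of_exponent_ge hc (Real.cos_le_one x) hα'.le
        _ = (Real.cos x)⁻¹ := Real.rpow_neg_one _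
        _ ≤ _ := inv_anti₀ hpos hcos
    have hα1 : 0 ≤ α + 1 := by linarith
    have hnn : 0 ≤ (α + 1) * Real.cos x ^ α := mul_nonneg hα1 (Real.rpow_nonneg hc.le _)
    rw [Pi.zero_apply, dist_zero_left, Real.norm_of_nonneg hnn]
    exact (mul_le_mul_of_nonneg_left hle hα1).trans_lt hlt
  · exact Filter.Eventually.of_forall fun α => Measurable.aestronglyMeasurable (by fun_prop)
  · exact (hg.integrableOn_Icc (a := 0) (b := Real.pi / 2)).mono_set Set.Ioo_subset_Icc_self
  · exact hg.continuousAt.continuousWithinAt.tendsto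

theorem continuous_Freal {β : ℝ} (hβ : 0 ≤ β) : Continuous (Freal β) := by
  have hc : Continuous fun y => Real.cos y ^ β :=
    Real.continuous_cos.rpow_const fun _ => Or.inr hβ
  exact intervalIntegral.continuous_primitive (fun a b => hc.intervalIntegrable a b) _

theorem Freal_pi_div_two {β : ℝ} (hβ : 0 ≤ β) :
    Freal β (Real.pi / 2) =
      √Real.pi * Real.Gamma ((β + 1) / 2) / Real.Gamma ((β + 2) / 2) := by
  have h := integral_cos_rpow_mul (α := β) (by linarith) (h := fun _ => 1) continuous_const
  simp only [mul_one] at h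
  rw [Freal, h, integral_mul_const, setIntegral_cos_rpow (by linarith)]
  ring

/-- the limit of `(α+1)·b(α; α₁,…,α_d)` as `α ↓ -1`. -/
theorem limit_b_at_minus_one
    (d : ℕ) (αs : Fin d → ℝ) (hαs : ∀ j, 0 ≤ αs j) :
    Filter.Tendsto (fun α : ℝ => (α + 1) * bReal d αs α)
      (nhdsWithin (-1) (Set.Ioi (-1)))
      (nhds (if d = 0 then 2
        else ∏ j, Real.sqrt Real.pi * Real.Gamma ((αs j + 1) / 2) /
          Real.Gamma ((αs j + 2) / 2))) := by
  have hcont : Continuous fun x => ∏ j, Freal (αs j) x :=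
    continuous_finsetProd _ fun j _ => continuous_Freal (hαs j)
  have key := tendsto_mul_integral_cos_rpow hcont
  unfold bReal
  convert key using 2
  split_ifs with hd
  · subst hd
    norm_num
  · have : NeZero d := ⟨hd⟩
    have hz : ∏ j, Freal (αs j) (-(Real.pi / 2)) = 0 :=
      Finset.prod_eq_zero (Finset.mem_univ 0) (by simp [Freal])
    rw [hz, add_zero]
    exact Finset.prod_congr rfl fun j _ => (Freal_pi_div_two (hαs j)).symm

end
end

section
/- Let k ≥ 2 be an even integer, and for complex α with Re α > k define a_k(α;1) := ∫_ℝ cosh(x)^{−α}·(1 + i·sinh x)^k dx, where cosh(x)^{−α} := exp(−α·log cosh x). Then a_k(k+1;1) = 0, and the derivative of the holomorphic function α ↦ a_k(α;1) at the point α = k+1 equals (π/k)·(−1)^{k/2−1}. -/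
/-!
Write `C = cosh x` and `w = 1 + i sinh x`, so that `C ^ 2 = w (2 - w)` and `|w| = C`.

Integrating the derivative of `C ^ (1 - α) w ^ j` over `ℝ` gives
`(α - 1 - j) a_{j+1}(α) = (α - 1 - 2 j) a_j(α)` for `Re α > j + 1` (`aOneC_succ`), hence
`a_k(α) = a_0(α) ∏_{j < k} (α - 1 - 2 j) / (α - 1 - j)` for `Re α > k` (`aOneC_eq_prod`).
For `k = 2 m` the factor `j = m` of the numerator vanishes at `α = k + 1`. So `a_k(k + 1) = 0`, and
since `a_0` is continuous there (`continuousAt_aOneC_zero`), the derivative is `a_0(k + 1)` times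
the remaining factors at `α = k + 1`. The product of these is computed with factorials
(`prod_before`, `prod_after`,
`prod_denominator`), and `a_0(2 m + 1) = π (2 m)! / (4 ^ m m! ^ 2)` follows from
`(α + 1) a_0(α + 2) = α a_0(α)` and `a_0(1) = ∫ 1 / cosh = π` (`aOneC_zero_odd`).
-/

open MeasureTheory Finset

noncomputable section

/-- `a_k(α;1) = ∫_ℝ cosh(x)^{-α} (1 + i sinh x)^k dx` for complex `α` with `Re α > k`. -/
def aOneC (k : ℕ) (α : ℂ) : ℂ :=
  ∫ x : ℝ, (Real.cosh x : ℂ) ^ (-α) * (1 + Complex.I * (Real.sinh x : ℂ)) ^ k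

open Filter Topology

/-! ### Bounds, integrability and derivatives of the integrand -/

theorem integrable_cosh_rpow_neg {r : ℝ} (hr : 0 < r) :
    Integrable (fun x : ℝ => Real.cosh x ^ (-r)) := by
  have hcont : Continuous (fun x : ℝ => Real.cosh x ^ (-r)) :=
    Real.continuous_cosh.rpow_const fun x => Or.inl (Real.cosh_pos x).ne'
  have h1 : IntegrableOn (fun x : ℝ => Real.cosh x ^ (-r)) (Set.Ioi 0) := by
    have h2 : IntegrableOn (fun x : ℝ => 2 ^ r * Real.exp ((-r) * x)) (Set.Ioi 0) :=
      (integrableOn_exp_mul_Ioi (by linarith) 0).const_mul _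
    refine h2.mono' hcont.aestronglyMeasurable (Eventually.of_forall fun x => ?_)
    rw [Real.norm_of_nonneg (Real.rpow_nonneg (Real.cosh_pos x).le _)]
    have h3 : Real.exp x / 2 ≤ Real.cosh x := by
      rw [Real.cosh_eq]; linarith [Real.exp_pos (-x)]
    calc Real.cosh x ^ (-r) ≤ (Real.exp x / 2) ^ (-r) :=
          Real.rpow_le_rpow_of_nonpos (by positivity) h3 (by linarith)
      _ = 2 ^ r * Real.exp ((-r) * x) := by
          rw [Real.div_rpow (Real.exp_pos x).le (by norm_num), ← Real.exp_mul,
            Real.rpow_neg (by norm_num : (0 : ℝ) ≤ 2), div_inv_eq_mul, mul_comm, mul_comm x]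
  have h4 : IntegrableOn (fun x : ℝ => Real.cosh x ^ (-r)) (Set.Iic 0) := by
    have h5 : IntegrableOn (fun x : ℝ => Real.cosh (-x) ^ (-r)) (Set.Iio 0) := by
      have h6 : IntegrableOn (fun x : ℝ => Real.cosh x ^ (-r)) (Set.Ioi (-0)) := by
        rwa [neg_zero]
      exact h6.comp_neg_Iio
    rw [integrableOn_Iic_iff_integrableOn_Iio]
    simpa using h5
  rw [← integrableOn_univ, ← Set.Iic_union_Ioi (a := (0 : ℝ))]
  exact h4.union h1

theorem norm_cosh_cpow (α : ℂ) (x : ℝ) :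
    ‖(Real.cosh x : ℂ) ^ (-α)‖ = Real.cosh x ^ (-α.re) := by
  rw [Complex.norm_cpow_eq_rpow_re_of_pos (Real.cosh_pos x), Complex.neg_re]

/-- `|1 + i sinh x| = cosh x`; this is why the integral converges exactly for `Re α > k`. -/
theorem norm_one_add_I_mul_sinh (x : ℝ) :
    ‖1 + Complex.I * (Real.sinh x : ℂ)‖ = Real.cosh x := by
  rw [← sq_eq_sq₀ (norm_nonneg _) (Real.cosh_pos x).le, ← Complex.normSq_eq_norm_sq,
    Complex.normSq_apply, Real.cosh_sq]
  simp [-Complex.ofReal_sinh]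
  ring

theorem continuous_cosh_cpow (α : ℂ) :
    Continuous (fun x : ℝ => (Real.cosh x : ℂ) ^ (-α)) := by
  refine (Complex.continuous_ofReal.comp Real.continuous_cosh).cpow continuous_const fun x => ?_
  exact Complex.ofReal_mem_slitPlane.mpr (Real.cosh_pos x)

theorem continuous_integrand (k : ℕ) (α : ℂ) :
    Continuous (fun x : ℝ =>
      (Real.cosh x : ℂ) ^ (-α) * (1 + Complex.I * (Real.sinh x : ℂ)) ^ k) :=
  (continuous_cosh_cpow α).mul ((continuous_const.add (continuous_const.mul
    (Complex.continuous_ofReal.comp Real.continuous_sinh))).pow k)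

theorem integrable_integrand {k : ℕ} {α : ℂ} (h : (k : ℝ) < α.re) :
    Integrable (fun x : ℝ =>
      (Real.cosh x : ℂ) ^ (-α) * (1 + Complex.I * (Real.sinh x : ℂ)) ^ k) := by
  refine (integrable_cosh_rpow_neg (sub_pos.mpr h)).mono'
    (continuous_integrand k α).aestronglyMeasurable (Eventually.of_forall fun x => le_of_eq ?_)
  rw [norm_mul, norm_pow, norm_cosh_cpow, norm_one_add_I_mul_sinh,
    ← Real.rpow_natCast, ← Real.rpow_add (Real.cosh_pos x)]
  ring_nf

theorem hasDerivAt_cosh_cpow (β : ℂ) (x : ℝ) :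
    HasDerivAt (fun x : ℝ => (Real.cosh x : ℂ) ^ (-β))
      (-β * (Real.cosh x : ℂ) ^ (-(β + 1)) * (Real.sinh x : ℂ)) x := by
  have h := (Complex.hasDerivAt_cosh (x : ℂ)).cpow_const (c := -β)
    (by rw [← Complex.ofReal_cosh]; exact Complex.ofReal_mem_slitPlane.mpr (Real.cosh_pos x))
  rw [show -β - 1 = -(β + 1) by ring] at h
  simpa only [Complex.ofReal_cosh, Complex.ofReal_sinh] using h.comp_ofReal

theorem hasDerivAt_one_add_I_mul_sinh (x : ℝ) :
    HasDerivAt (fun x : ℝ => 1 + Complex.I * (Real.sinh x : ℂ))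
      (Complex.I * (Real.cosh x : ℂ)) x :=
  (((Real.hasDerivAt_sinh x).ofReal_comp).const_mul _).const_add _

theorem cosh_cpow_neg_eq (α : ℂ) (x : ℝ) :
    (Real.cosh x : ℂ) ^ (-α) = (Real.cosh x : ℂ) ^ (-(α + 1)) * (Real.cosh x : ℂ) := by
  have h0 : (Real.cosh x : ℂ) ≠ 0 := Complex.ofReal_ne_zero.mpr (Real.cosh_pos x).ne'
  rw [show -α = -(α + 1) + 1 by ring, Complex.cpow_add _ _ h0, Complex.cpow_one]

theorem ofReal_cosh_sq' (x : ℝ) : (Real.cosh x : ℂ) ^ 2 = (Real.sinh x : ℂ) ^ 2 + 1 := by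
  exact_mod_cast congrArg (fun t : ℝ => (t : ℂ)) (Real.cosh_sq x)

/-! ### The recurrence in `k` -/

/-- The integrated derivative of `cosh ^ (1 - α) * (1 + i sinh) ^ j`. -/
theorem aOneC_succ (j : ℕ) (α : ℂ) (h : (j : ℝ) + 1 < α.re) :
    (α - 1 - j) * aOneC (j + 1) α = (α - 1 - 2 * j) * aOneC j α := by
  have hi1 := integrable_integrand (k := j + 1) (α := α) (by push_cast; exact h)
  have hi0 := integrable_integrand (k := j) (α := α) (by linarith)
  have hif := integrable_integrand (k := j) (α := α - 1) (by simp; linarith)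
  have hz := integral_eq_zero_of_hasDerivAt_of_integrable
    (f' := fun x : ℝ =>
      (Complex.I * (α - 1 - j)) *
        ((Real.cosh x : ℂ) ^ (-α) * (1 + Complex.I * (Real.sinh x : ℂ)) ^ (j + 1)) -
      (Complex.I * (α - 1 - 2 * j)) *
        ((Real.cosh x : ℂ) ^ (-α) * (1 + Complex.I * (Real.sinh x : ℂ)) ^ j))
    (fun x => ?_) ((hi1.const_mul _).sub (hi0.const_mul _)) hif
  · rw [integral_sub (hi1.const_mul _) (hi0.const_mul _), integral_const_mul,
      integral_const_mul] at hz
    change Complex.I * (α - 1 - j) * aOneC (j + 1) α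
      - Complex.I * (α - 1 - 2 * j) * aOneC j α = 0 at hz
    apply mul_left_cancel₀ Complex.I_ne_zero
    linear_combination hz
  · have hd := (hasDerivAt_cosh_cpow (α - 1) x).mul ((hasDerivAt_one_add_I_mul_sinh x).pow j)
    refine hd.congr_deriv ?_
    simp only [Pi.pow_apply]
    -- Stated with the factor `j` so that it also holds for `j = 0`, where `j - 1` truncates.
    have hw : (j : ℂ) * (1 + Complex.I * (Real.sinh x : ℂ)) ^ j
        = j * (1 + Complex.I * (Real.sinh x : ℂ)) ^ (j - 1)
          * (1 + Complex.I * (Real.sinh x : ℂ)) := by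
      rcases j with _ | j
      · simp
      · rw [Nat.add_sub_cancel]; ring
    rw [cosh_cpow_neg_eq (α - 1) x, sub_add_cancel]
    have hc := ofReal_cosh_sq' x
    have hI := Complex.I_sq
    generalize (Real.cosh x : ℂ) ^ (-α) = P at *
    generalize (Real.cosh x : ℂ) = C at *
    generalize (Real.sinh x : ℂ) = S at *
    rw [pow_succ]
    generalize (1 + Complex.I * S) ^ j = W at *
    generalize (1 + Complex.I * S) ^ (j - 1) = V at *
    linear_combination (Complex.I * P * j * V) * hc
      + (Complex.I * P * (Complex.I * S - 1)) * hw
      - ((α - 1) * P * W * S - j * V * Complex.I * P * S ^ 2) * hI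

theorem aOneC_eq_prod (k : ℕ) (α : ℂ) (h : (k : ℝ) < α.re) :
    aOneC k α = aOneC 0 α *
      ((∏ j ∈ range k, (α - 1 - 2 * j)) / ∏ j ∈ range k, (α - 1 - j)) := by
  induction k with
  | zero => simp
  | succ k ih =>
    push_cast at h
    have h1 := aOneC_succ k α h
    have hne : α - 1 - k ≠ 0 := by
      intro h0
      have := congrArg Complex.re h0
      simp at this
      linarith
    rw [prod_range_succ, prod_range_succ, mul_div_mul_comm, ← mul_assoc, ← ih (by linarith)]
    field_simp
    linear_combination h1

/-! ### The function `aOneC 0` -/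

/-- The integrated derivative of `sinh * cosh ^ (-(α + 1))`. -/
theorem aOneC_zero_add_two (α : ℂ) (h : 0 < α.re) :
    (α + 1) * aOneC 0 (α + 2) = α * aOneC 0 α := by
  have hi2 := integrable_integrand (k := 0) (α := α + 2) (by simp; linarith)
  have hi0 := integrable_integrand (k := 0) (α := α) (by simpa using h)
  have hif : Integrable (fun x : ℝ => (Real.cosh x : ℂ) ^ (-(α + 1)) * (Real.sinh x : ℂ)) := by
    refine (integrable_cosh_rpow_neg h).mono' ((continuous_cosh_cpow _).mul
      (Complex.continuous_ofReal.comp Real.continuous_sinh)).aestronglyMeasurable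
      (Eventually.of_forall fun x => ?_)
    have hs : |Real.sinh x| ≤ Real.cosh x :=
      abs_le_of_sq_le_sq (by rw [Real.cosh_sq]; linarith) (Real.cosh_pos x).le
    rw [norm_mul, norm_cosh_cpow, Complex.norm_real, Real.norm_eq_abs]
    calc _ ≤ Real.cosh x ^ (-(α + 1).re) * Real.cosh x := by
          gcongr
      _ = Real.cosh x ^ (-(α + 1).re + 1) := by
          rw [Real.rpow_add (Real.cosh_pos x), Real.rpow_one]
      _ = _ := by simp
  have hz := integral_eq_zero_of_hasDerivAt_of_integrable
    (f' := fun x : ℝ =>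
      (α + 1) *
        ((Real.cosh x : ℂ) ^ (-(α + 2)) * (1 + Complex.I * (Real.sinh x : ℂ)) ^ 0) -
      α * ((Real.cosh x : ℂ) ^ (-α) * (1 + Complex.I * (Real.sinh x : ℂ)) ^ 0))
    (fun x => ?_) ((hi2.const_mul _).sub (hi0.const_mul _)) hif
  · rw [integral_sub (hi2.const_mul _) (hi0.const_mul _), integral_const_mul,
      integral_const_mul] at hz
    change (α + 1) * aOneC 0 (α + 2) - α * aOneC 0 α = 0 at hz
    linear_combination hz
  · have hd := (hasDerivAt_cosh_cpow (α + 1) x).mul ((Real.hasDerivAt_sinh x).ofReal_comp)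
    refine hd.congr_deriv ?_
    rw [cosh_cpow_neg_eq α x, cosh_cpow_neg_eq (α + 1) x,
      show α + 1 + 1 = α + 2 by ring]
    have hc := ofReal_cosh_sq' x
    linear_combination ((1 + α) * (Real.cosh x : ℂ) ^ (-(α + 2))) * hc

/-- An antiderivative of `1 / cosh` is `arctan ∘ sinh`. -/
theorem aOneC_zero_one : aOneC 0 1 = (Real.pi : ℂ) := by
  have hi : Integrable (fun x : ℝ => Real.cosh x ^ (-1 : ℝ)) :=
    integrable_cosh_rpow_neg one_pos
  have hd : ∀ x : ℝ, HasDerivAt (fun x => Real.arctan (Real.sinh x)) (Real.cosh x ^ (-1 : ℝ)) x := by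
    intro x
    refine (Real.hasDerivAt_sinh x).arctan.congr_deriv ?_
    have := (Real.cosh_pos x).ne'
    rw [Real.rpow_neg_one, add_comm, ← Real.cosh_sq]
    field_simp
  have htop : Tendsto (fun x => Real.arctan (Real.sinh x)) atTop (𝓝 (Real.pi / 2)) :=
    (tendsto_nhds_of_tendsto_nhdsWithin Real.tendsto_arctan_atTop).comp
      Real.sinhOrderIso.tendsto_atTop
  have hbot : Tendsto (fun x => Real.arctan (Real.sinh x)) atBot (𝓝 (-(Real.pi / 2))) :=
    (tendsto_nhds_of_tendsto_nhdsWithin Real.tendsto_arctan_atBot).comp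
      Real.sinhOrderIso.tendsto_atBot
  have h := integral_of_hasDerivAt_of_tendsto hd hi hbot htop
  have h2 : aOneC 0 1 = ((∫ x : ℝ, Real.cosh x ^ (-1 : ℝ) : ℝ) : ℂ) := by
    rw [aOneC, ← integral_complex_ofReal]
    refine integral_congr_ae (Eventually.of_forall fun x => ?_)
    simp [Real.rpow_neg_one, Complex.cpow_neg_one]
  rw [h2, h]
  congr 1
  ring

theorem aOneC_zero_odd (m : ℕ) :
    aOneC 0 (2 * m + 1) = Real.pi * (2 * m).factorial / (4 ^ m * (m.factorial : ℂ) ^ 2) := by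
  induction m with
  | zero => simp [aOneC_zero_one]
  | succ m ih =>
    have h := aOneC_zero_add_two (2 * m + 1) (by simp; positivity)
    rw [ih] at h
    have h1 : (m.factorial : ℂ) ≠ 0 := Nat.cast_ne_zero.mpr m.factorial_ne_zero
    have h2 : (m : ℂ) + 1 ≠ 0 := Nat.cast_add_one_ne_zero m
    rw [show 2 * ((m + 1 : ℕ) : ℂ) + 1 = 2 * m + 1 + 2 by push_cast; ring,
      show 2 * (m + 1) = 2 * m + 1 + 1 by ring, Nat.factorial_succ, Nat.factorial_succ,
      Nat.factorial_succ]
    have h3 : (2 * m + 1 + 1 : ℂ) ≠ 0 := by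
      rw [show (2 * m + 1 + 1 : ℂ) = 2 * (m + 1) by ring]; exact mul_ne_zero two_ne_zero h2
    apply mul_left_cancel₀ h3
    rw [h]
    push_cast
    field_simp
    ring

theorem continuousAt_aOneC_zero {α₀ : ℂ} (h : 0 < α₀.re) : ContinuousAt (aOneC 0) α₀ := by
  refine continuousAt_of_dominated (bound := fun x : ℝ => Real.cosh x ^ (-(α₀.re / 2)))
    (Eventually.of_forall fun α => (continuous_integrand 0 α).aestronglyMeasurable)
    ?_ (integrable_cosh_rpow_neg (half_pos h)) (Eventually.of_forall fun x => ?_)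
  · have : ∀ᶠ α : ℂ in 𝓝 α₀, α₀.re / 2 < α.re :=
      Complex.continuous_re.continuousAt.eventually (lt_mem_nhds (half_lt_self h))
    filter_upwards [this] with α hα
    refine Eventually.of_forall fun x => ?_
    rw [pow_zero, mul_one, norm_cosh_cpow]
    exact Real.rpow_le_rpow_of_exponent_le (Real.one_le_cosh x) (by linarith)
  · have h0 : (Real.cosh x : ℂ) ≠ 0 := Complex.ofReal_ne_zero.mpr (Real.cosh_pos x).ne'
    exact ((continuous_neg.const_cpow (Or.inl h0)).mul continuous_const).continuousAt

/-! ### The products at `α = k + 1` -/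

theorem prod_denominator (n : ℕ) :
    ∏ j ∈ range n, ((n : ℂ) - j) = n.factorial := by
  induction n with
  | zero => simp
  | succ n ih =>
    rw [prod_range_succ', Nat.factorial_succ]
    push_cast
    simp only [add_sub_add_right_eq_sub, ih, sub_zero]
    ring

/-- The factors of the numerator before the vanishing one. -/
theorem prod_before (m : ℕ) :
    ∏ j ∈ range m, ((2 * m : ℂ) - 2 * j) = 2 ^ m * m.factorial := by
  simp only [← mul_sub, prod_mul_distrib, prod_denominator, prod_const, card_range]

/-- The factors of the numerator after the vanishing one. -/
theorem prod_after (m n : ℕ) :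
    ∏ i ∈ range n, ((2 * m : ℂ) - 2 * ((m + (1 + i) : ℕ) : ℂ)) = (-2) ^ n * n.factorial := by
  induction n with
  | zero => simp
  | succ n ih =>
    rw [prod_range_succ, ih, Nat.factorial_succ]
    push_cast
    ring

/-! ### The simple zero at `α = k + 1` -/

/-- Differentiability of `G` is not needed: the difference quotient at `a` is `G` itself. -/
theorem hasDerivAt_sub_mul_of_continuousAt {G : ℂ → ℂ} {a : ℂ} (hG : ContinuousAt G a) :
    HasDerivAt (fun z => (z - a) * G z) (G a) a := by
  rw [hasDerivAt_iff_tendsto_slope]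
  refine (hG.tendsto.mono_left nhdsWithin_le_nhds).congr' ?_
  filter_upwards [self_mem_nhdsWithin] with z hz
  have : z - a ≠ 0 := sub_ne_zero.mpr hz
  rw [slope_def_field]
  field_simp
  ring

/-- For `k = 2 (n + 1)`, the quotient of `aOneC k α` by `α - (k + 1)`: the numerator omits the factor
with index `n + 1`, which is `α - (k + 1)` itself. -/
def quotientFactor (n : ℕ) (α : ℂ) : ℂ :=
  aOneC 0 α *
    (((∏ j ∈ range (n + 1), (α - 1 - 2 * j)) *
        ∏ i ∈ range n, (α - 1 - 2 * ((n + 1 + (1 + i) : ℕ) : ℂ))) /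
      ∏ j ∈ range (2 * (n + 1)), (α - 1 - j))

theorem aOneC_eq_mul_quotientFactor (n : ℕ) (α : ℂ) (h : ((2 * (n + 1) : ℕ) : ℝ) < α.re) :
    aOneC (2 * (n + 1)) α = (α - (((2 * (n + 1) : ℕ) : ℂ) + 1)) * quotientFactor n α := by
  have hsplit : ∏ j ∈ range (2 * (n + 1)), (α - 1 - 2 * (j : ℂ)) =
      (α - (((2 * (n + 1) : ℕ) : ℂ) + 1)) *
      ((∏ j ∈ range (n + 1), (α - 1 - 2 * j)) *
        ∏ i ∈ range n, (α - 1 - 2 * ((n + 1 + (1 + i) : ℕ) : ℂ))) := by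
    rw [show 2 * (n + 1) = (n + 1) + (1 + n) by ring, prod_range_add _ (n + 1) (1 + n),
      prod_range_add _ 1 n, prod_range_one]
    push_cast
    ring
  rw [aOneC_eq_prod _ _ h, hsplit, quotientFactor]
  ring

theorem continuousAt_quotientFactor (n : ℕ) :
    ContinuousAt (quotientFactor n) (((2 * (n + 1) : ℕ) : ℂ) + 1) := by
  have hden : ∏ j ∈ range (2 * (n + 1)), ((((2 * (n + 1) : ℕ) : ℂ) + 1) - 1 - j) ≠ 0 := by
    rw [add_sub_cancel_right, prod_denominator]
    exact Nat.cast_ne_zero.mpr (Nat.factorial_ne_zero _)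
  refine (continuousAt_aOneC_zero ?_).mul (ContinuousAt.div ?_ ?_ hden)
  · rw [Complex.add_re, Complex.natCast_re, Complex.one_re]; positivity
  · exact Continuous.continuousAt (by fun_prop)
  · exact Continuous.continuousAt (by fun_prop)

theorem quotientFactor_apply (n : ℕ) :
    quotientFactor n (((2 * (n + 1) : ℕ) : ℂ) + 1) =
      Real.pi / ((2 * (n + 1) : ℕ) : ℂ) * (-1) ^ n := by
  have h1 := aOneC_zero_odd (n + 1)
  have h2 := prod_before (n + 1)
  have h3 := prod_after (n + 1) n
  have h4 := prod_denominator (2 * (n + 1))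
  have hc : ((2 * (n + 1) : ℕ) : ℂ) = 2 * ((n + 1 : ℕ) : ℂ) := by push_cast; ring
  rw [quotientFactor, add_sub_cancel_right, h4, hc, h1, h2, h3]
  have f1 : ((2 * (n + 1)).factorial : ℂ) ≠ 0 := Nat.cast_ne_zero.mpr (Nat.factorial_ne_zero _)
  have f2 : (n.factorial : ℂ) ≠ 0 := Nat.cast_ne_zero.mpr (Nat.factorial_ne_zero _)
  have f3 : (n : ℂ) + 1 ≠ 0 := Nat.cast_add_one_ne_zero n
  have e : (4 : ℂ) ^ (n + 1) = 2 ^ (n + 1) * (2 * 2 ^ n) := by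
    rw [← pow_succ', ← mul_pow]; norm_num
  rw [Nat.factorial_succ n, e, neg_pow (2 : ℂ)]
  push_cast
  field_simp

/-- for even `k ≥ 2`, `a_k(k+1;1) = 0` and the derivative of
`α ↦ a_k(α;1)` at `α = k+1` equals `(π/k)·(-1)^{k/2-1}`. -/
theorem aOneC_value_and_deriv_at_k_add_one
    (k : ℕ) (hk : 2 ≤ k) (hkeven : Even k) :
    aOneC k ((k : ℂ) + 1) = 0 ∧
    deriv (aOneC k) ((k : ℂ) + 1)
      = ((Real.pi / k * (-1 : ℝ) ^ (k / 2 - 1) : ℝ) : ℂ) := by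
  obtain ⟨n, rfl⟩ : ∃ n, k = 2 * (n + 1) := by
    obtain ⟨m, hm⟩ := hkeven
    exact ⟨m - 1, by omega⟩
  have hre : ((2 * (n + 1) : ℕ) : ℝ) < (((2 * (n + 1) : ℕ) : ℂ) + 1).re := by
    rw [Complex.add_re, Complex.natCast_re, Complex.one_re]; linarith
  constructor
  · rw [aOneC_eq_mul_quotientFactor n _ hre, sub_self, zero_mul]
  · have hev : aOneC (2 * (n + 1)) =ᶠ[𝓝 (((2 * (n + 1) : ℕ) : ℂ) + 1)]
        fun α => (α - (((2 * (n + 1) : ℕ) : ℂ) + 1)) * quotientFactor n α := by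
      filter_upwards [Complex.continuous_re.continuousAt.eventually (lt_mem_nhds hre)] with α hα
      exact aOneC_eq_mul_quotientFactor n α hα
    rw [hev.deriv_eq,
      (hasDerivAt_sub_mul_of_continuousAt (continuousAt_quotientFactor n)).deriv,
      quotientFactor_apply, show 2 * (n + 1) / 2 - 1 = n by omega]
    push_cast
    ring

end
end
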